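/- On F ⊗ F ⊗ F, with k invertible (k⁻¹|m⟩ = q^{−m}|m⟩), define the operators ξ₁ = (1−q²)⁻¹ (a⁺k⁻¹ ⊗ 1 ⊗ 1) and ξ₂ = (1−q²)⁻¹ (a⁻ ⊗ a⁺k⁻¹ ⊗ 1 + k ⊗ k⁻¹ ⊗ a⁺k⁻¹). In the renormalized basis |a,b,c⟩⟩ = d_a d_b d_c |a⟩⊗|b⟩⊗|c⟩, where d_m = q^{−m(m−1)/2}(1−q²)^{−m}, these satisfy ξ₁|a,b,c⟩⟩ = |a+1,b,c⟩⟩ and ξ₂|a,b,c⟩⟩ = [a]₁ |a−1,b+1,c⟩⟩ + q^{a−b} |a,b,c+1⟩⟩ for all a,b,c ∈ ℕ (the term with index a−1 = −1 being absent since [0]₁ = 0). In particular ξ₁, ξ₂ act on the renormalized basis by exactly the same structure constants as left multiplication by e₁, e₂ on the PBW monomials of U_q⁺(A₂). -/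

import Mathlib

noncomputable section

/-- The base field `K = ℚ(q)`, rational functions over `ℚ`. -/
abbrev K : Type := RatFunc ℚ

/-- The indeterminate `q`. -/
def q : K := RatFunc.X

/-- The Fock space `F` with basis `|m⟩, m ∈ ℕ`. -/
abbrev F : Type := ℕ →₀ K

/-- The basis vector `|m⟩`. -/
def ket (m : ℕ) : F := Finsupp.single m 1

/-- The operator `k : |m⟩ ↦ q^m |m⟩`. -/
def opK : Module.End K F := Finsupp.lift F K ℕ fun m => (q ^ m) • ket m

/-- The operator `a⁺ : |m⟩ ↦ |m+1⟩`. -/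
def opAp : Module.End K F := Finsupp.lift F K ℕ fun m => ket (m + 1)

/-- The operator `a⁻ : |m⟩ ↦ (1 - q^{2m}) |m-1⟩` (so `a⁻|0⟩ = 0`). -/
def opAm : Module.End K F := Finsupp.lift F K ℕ fun m => (1 - q ^ (2 * m)) • ket (m - 1)

/-- The inverse `k⁻¹ : |m⟩ ↦ q^{-m} |m⟩` of the operator `k`. -/
def opKInv : Module.End K F := Finsupp.lift F K ℕ fun m => (q ^ m)⁻¹ • ket m

/-- The `q`-integer `[m]₁ = (q^m - q^{-m})/(q - q⁻¹)`. -/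
def qint (n : ℕ) : K := (q ^ n - q⁻¹ ^ n) / (q - q⁻¹)

open TensorProduct

/-- The triple tensor product `F ⊗ F ⊗ F`. -/
abbrev T3 : Type := F ⊗[K] (F ⊗[K] F)

instance : AddCommGroup T3 := by
  exact @TensorProduct.addCommGroup K _ F (F ⊗[K] F) _ _ _ _

/-- `f ⊗ g ⊗ h` as an operator on `F ⊗ F ⊗ F`. -/
def tens3 (f g h : Module.End K F) : Module.End K T3 :=
  TensorProduct.map f (TensorProduct.map g h)

/-- The operator `ξ₁ = (1−q²)⁻¹ (a⁺k⁻¹ ⊗ 1 ⊗ 1)`. -/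
def xi1 : Module.End K T3 := (1 - q ^ 2)⁻¹ • tens3 (opAp * opKInv) 1 1

/-- The operator `ξ₂ = (1−q²)⁻¹ (a⁻ ⊗ a⁺k⁻¹ ⊗ 1 + k ⊗ k⁻¹ ⊗ a⁺k⁻¹)`. -/
def xi2 : Module.End K T3 :=
  (1 - q ^ 2)⁻¹ • (tens3 opAm (opAp * opKInv) 1 + tens3 opK opKInv (opAp * opKInv))

/-- The renormalization factor `d_m = q^{−m(m−1)/2}(1−q²)^{−m}`. -/
def dcoef (m : ℕ) : K := (q ^ (m * (m - 1) / 2) * (1 - q ^ 2) ^ m)⁻¹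

/-- The renormalized basis vector `|a,b,c⟩⟩ = d_a d_b d_c |a⟩⊗|b⟩⊗|c⟩`. -/
def kett (a b c : ℕ) : T3 :=
  (dcoef a * dcoef b * dcoef c) • (ket a ⊗ₜ[K] (ket b ⊗ₜ[K] ket c))

theorem q_ne : q ≠ 0 := RatFunc.X_ne_zero

theorem one_sub_ne : (1 - q ^ 2 : K) ≠ 0 := by
  intro h
  have h1 : (algebraMap (Polynomial ℚ) K) (1 - Polynomial.X ^ 2) = algebraMap (Polynomial ℚ) K 0 := by
    simpa [q] using h
  have h2 := RatFunc.algebraMap_injective ℚ h1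
  have h3 := congrArg (Polynomial.eval 0) h2
  simp at h3

theorem opK_ket (m : ℕ) : opK (ket m) = (q ^ m) • ket m := by
  simp [opK, ket, ← Finsupp.single_mul]

theorem opAp_ket (m : ℕ) : opAp (ket m) = ket (m + 1) := by
  simp [opAp, ket]

theorem opAm_ket (m : ℕ) : opAm (ket m) = (1 - q ^ (2 * m)) • ket (m - 1) := by
  simp [opAm, ket]

theorem opKInv_ket (m : ℕ) : opKInv (ket m) = (q ^ m)⁻¹ • ket m := by
  simp [opKInv, ket, ← Finsupp.single_mul]

theorem dcoef_succ (m : ℕ) : dcoef (m + 1) = dcoef m * (q ^ m)⁻¹ * (1 - q ^ 2)⁻¹ := by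
  have h : (m + 1) * (m + 1 - 1) / 2 = m * (m - 1) / 2 + m := by
    have := Finset.sum_range_succ (fun i => i) m
    rwa [Finset.sum_range_id, Finset.sum_range_id] at this
  unfold dcoef
  rw [h, pow_add, pow_succ (1 - q ^ 2)]
  simp only [mul_inv]
  ring

theorem qint_succ (a : ℕ) :
    qint (a + 1) = (1 - q ^ (2 * (a + 1))) * (1 - q ^ 2)⁻¹ * (q ^ a)⁻¹ := by
  have hq := q_ne
  have h1 := one_sub_ne
  have h2 : (q - q⁻¹ : K) = -(1 - q ^ 2) * q⁻¹ := by
    field_simp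
    ring
  unfold qint
  rw [h2, inv_pow]
  field_simp
  ring

/-- the action of `ξ₁, ξ₂` on the renormalized basis reproduces the
structure constants of left multiplication by `e₁, e₂` on PBW monomials of `U_q⁺(A₂)`.
(The term with index `a−1 = −1` is absent since `[0]₁ = 0`; truncated subtraction
on `ℕ` realizes this convention.) -/
theorem statement9 (a b c : ℕ) :
    xi1 (kett a b c) = kett (a + 1) b c ∧
    xi2 (kett a b c)
      = qint a • kett (a - 1) (b + 1) c + (q ^ ((a : ℤ) - b)) • kett a b (c + 1) := by
  have hq := q_ne
  have h1 := one_sub_ne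
  constructor
  · simp only [xi1, kett, tens3, LinearMap.smul_apply, map_smul, TensorProduct.map_tmul,
      Module.End.mul_apply, Module.End.one_apply, opKInv_ket, opAp_ket, dcoef_succ,
      ← TensorProduct.smul_tmul', smul_smul]
    congr 1
    ring
  · simp only [xi2, kett, tens3, LinearMap.smul_apply, LinearMap.add_apply, map_smul,
      TensorProduct.map_tmul, Module.End.mul_apply, Module.End.one_apply, opKInv_ket, opAp_ket,
      opK_ket, opAm_ket, ← TensorProduct.smul_tmul', TensorProduct.tmul_smul, smul_smul, smul_add]
    congr 1
    · cases a with
      | zero => simp [qint]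
      | succ a =>
        simp only [Nat.add_sub_cancel]
        congr 1
        rw [dcoef_succ, dcoef_succ, qint_succ]
        ring
    · congr 1
      rw [dcoef_succ, zpow_sub₀ hq, zpow_natCast, zpow_natCast]
      ring
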